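/- arXiv:2005.01811 — 2 statements merged into one kernel-verified Lean document; each statement's English description precedes it below -/
import Mathlib

section
/- Let γ > 1 and Δx > 0, and consider a cell [x_{i−1/2}, x_{i+1/2}] of width Δx with center x_i. Let s : [x_{i−1/2}, x_{i+1/2}] → ℝ be continuous, let p₀ ∈ ℝ, and define the equilibrium pressure p(x) = p₀ + ∫_{x_i}^{x} s(ξ) dξ; assume p(x_{i−1/2}) > 0 and p(x_{i+1/2}) > 0. Let 𝓕 : ℝ³ × ℝ³ → ℝ³ be a numerical flux with the contact property for the ideal gas law: 𝓕((ρ_L, 0, p/(γ−1)), (ρ_R, 0, p/(γ−1))) = (0, p, 0) for all ρ_L, ρ_R, p > 0. Let ρ_L^±, ρ_R^± > 0 be arbitrary interface densities and set F_{i±1/2} = 𝓕((ρ_L^±, 0, p(x_{i±1/2})/(γ−1)), (ρ_R^±, 0, p(x_{i±1/2})/(γ−1))). Then the semi-discrete residual vanishes componentwise: −(1/Δx)(F_{i+1/2} − F_{i−1/2}) + (0, (1/Δx)∫_{x_{i−1/2}}^{x_{i+1/2}} s(ξ) dξ, 0) = (0, 0, 0). In particular the momentum flux difference (1/Δx)(p(x_{i+1/2})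 − p(x_{i−1/2})) equals the cell-averaged momentum source (1/Δx)∫_{x_{i−1/2}}^{x_{i+1/2}} s(ξ) dξ, and the density and energy components of the flux difference vanish. -/
open MeasureTheory

/-- The contact property of a numerical flux `F` for an arbitrary equation of state: across a
discontinuity at rest with common pressure, the flux is the exact Euler flux. Here `Q ρ p` is the
conserved state of the gas at rest with density `ρ` and pressure `p`, and the components of the flux
are those of density, momentum and energy. -/
def HasContactProperty {U : Type*} (Q : ℝ → ℝ → U) (F : U → U → Fin 3 → ℝ) : Prop :=
  ∀ ρL ρR p : ℝ, 0 < ρL → 0 < ρR → 0 < p → F (Q ρL p) (Q ρR p) = ![0, p, 0]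

theorem HasContactProperty.flux_sub {U : Type*} {Q : ℝ → ℝ → U} {F : U → U → Fin 3 → ℝ}
    (hF : HasContactProperty Q F) {ρL ρR p ρL' ρR' p' : ℝ} (hρL : 0 < ρL) (hρR : 0 < ρR)
    (hp : 0 < p) (hρL' : 0 < ρL') (hρR' : 0 < ρR') (hp' : 0 < p') :
    F (Q ρL' p') (Q ρR' p') - F (Q ρL p) (Q ρR p) = ![0, p' - p, 0] := by
  rw [hF ρL' ρR' p' hρL' hρR' hp', hF ρL ρR p hρL hρR hp]
  ext k
  fin_cases k <;> simp

/-- The right-hand side of the semi-discrete finite volume scheme on a cell of width `h`, with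
fluxes `Fm` and `Fp` through the left and right interface and cell-averaged source `S`. -/
noncomputable def semidiscreteResidual {V : Type*} [AddCommGroup V] [Module ℝ V] (h : ℝ)
    (Fm Fp S : V) : V :=
  -(1 / h) • (Fp - Fm) + S

theorem semidiscreteResidual_eq_zero_iff {V : Type*} [AddCommGroup V] [Module ℝ V]
    {h : ℝ} {Fm Fp S : V} :
    semidiscreteResidual h Fm Fp S = 0 ↔ (1 / h) • (Fp - Fm) = S := by
  rw [semidiscreteResidual, neg_smul, neg_add_eq_zero]

theorem sub_eq_integral_of_eq_const_add_integral {E : Type*} [NormedAddCommGroup E]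
    [NormedSpace ℝ E] {μ : Measure ℝ} {s p : ℝ → E} {p₀ : E} {a b c : ℝ}
    (hp : ∀ x, p x = p₀ + ∫ ξ in a..x, s ξ ∂μ)
    (hac : IntervalIntegrable s μ a c) (hab : IntervalIntegrable s μ a b) :
    p c - p b = ∫ ξ in b..c, s ξ ∂μ := by
  rw [hp, hp, add_sub_add_left_eq_sub, intervalIntegral.integral_interval_sub_left hac hab]

theorem wellbalanced_residual_vanishes_general {U : Type*} {Q : ℝ → ℝ → U}
    {F : U → U → Fin 3 → ℝ} (hF : HasContactProperty Q F)
    {Δx xi : ℝ} (hΔx : 0 < Δx) {s : ℝ → ℝ}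
    (hs : IntervalIntegrable s volume (xi - Δx / 2) (xi + Δx / 2))
    {p₀ : ℝ} {p : ℝ → ℝ} (hp : ∀ x, p x = p₀ + ∫ ξ in xi..x, s ξ)
    (hpl : 0 < p (xi - Δx / 2)) (hpr : 0 < p (xi + Δx / 2))
    {ρLm ρRm ρLp ρRp : ℝ}
    (hρLm : 0 < ρLm) (hρRm : 0 < ρRm) (hρLp : 0 < ρLp) (hρRp : 0 < ρRp) :
    let Fm := F (Q ρLm (p (xi - Δx / 2))) (Q ρRm (p (xi - Δx / 2)))
    let Fp := F (Q ρLp (p (xi + Δx / 2))) (Q ρRp (p (xi + Δx / 2)))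
    let S : Fin 3 → ℝ :=
      ![0, (1 / Δx) * ∫ ξ in (xi - Δx / 2)..(xi + Δx / 2), s ξ, 0]
    semidiscreteResidual Δx Fm Fp S = 0 ∧
      (1 / Δx) * (p (xi + Δx / 2) - p (xi - Δx / 2)) =
        (1 / Δx) * ∫ ξ in (xi - Δx / 2)..(xi + Δx / 2), s ξ ∧
      Fp 0 - Fm 0 = 0 ∧ Fp 2 - Fm 2 = 0 := by
  intro Fm Fp S
  have center_mem : xi ∈ Set.uIcc (xi - Δx / 2) (xi + Δx / 2) :=
    Set.mem_uIcc_of_le (by linarith) (by linarith)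
  have pressure_jump : p (xi + Δx / 2) - p (xi - Δx / 2) =
      ∫ ξ in (xi - Δx / 2)..(xi + Δx / 2), s ξ :=
    sub_eq_integral_of_eq_const_add_integral hp
      (hs.mono_set (Set.uIcc_subset_uIcc_right center_mem))
      (hs.mono_set (Set.uIcc_subset_uIcc_left center_mem)).symm
  have flux_jump : Fp - Fm = ![0, p (xi + Δx / 2) - p (xi - Δx / 2), 0] :=
    hF.flux_sub hρLm hρRm hpl hρLp hρRp hpr
  refine ⟨semidiscreteResidual_eq_zero_iff.mpr ?_, by rw [pressure_jump],
    congrFun flux_jump 0, congrFun flux_jump 2⟩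
  rw [flux_jump, pressure_jump]
  simp [S]

theorem wellbalanced_residual_vanishes
    (γ Δx xi : ℝ) (hγ : 1 < γ) (hΔx : 0 < Δx)
    (s : ℝ → ℝ) (hs : ContinuousOn s (Set.Icc (xi - Δx / 2) (xi + Δx / 2)))
    (p₀ : ℝ) (p : ℝ → ℝ)
    (hp : ∀ x, p x = p₀ + ∫ ξ in xi..x, s ξ)
    (hpl : 0 < p (xi - Δx / 2)) (hpr : 0 < p (xi + Δx / 2))
    (F : (Fin 3 → ℝ) → (Fin 3 → ℝ) → Fin 3 → ℝ)
    -- contact property for the ideal gas law: Q(ρ, 0, p) = (ρ, 0, p/(γ−1))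
    (hF : ∀ ρL ρR pr : ℝ, 0 < ρL → 0 < ρR → 0 < pr →
      F ![ρL, 0, pr / (γ - 1)] ![ρR, 0, pr / (γ - 1)] = ![0, pr, 0])
    (ρLm ρRm ρLp ρRp : ℝ)
    (hρLm : 0 < ρLm) (hρRm : 0 < ρRm) (hρLp : 0 < ρLp) (hρRp : 0 < ρRp) :
    let Fm := F ![ρLm, 0, p (xi - Δx / 2) / (γ - 1)]
                ![ρRm, 0, p (xi - Δx / 2) / (γ - 1)]
    let Fp := F ![ρLp, 0, p (xi + Δx / 2) / (γ - 1)]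
                ![ρRp, 0, p (xi + Δx / 2) / (γ - 1)]
    let S : Fin 3 → ℝ :=
      ![0, (1 / Δx) * ∫ ξ in (xi - Δx / 2)..(xi + Δx / 2), s ξ, 0]
    (∀ k : Fin 3, -(1 / Δx) * (Fp k - Fm k) + S k = 0) ∧
      (1 / Δx) * (p (xi + Δx / 2) - p (xi - Δx / 2)) =
        (1 / Δx) * ∫ ξ in (xi - Δx / 2)..(xi + Δx / 2), s ξ ∧
      Fp 0 - Fm 0 = 0 ∧ Fp 2 - Fm 2 = 0 := by
  obtain ⟨residual_eq_zero, balance⟩ := wellbalanced_residual_vanishes_general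
    (Q := fun ρ pr ↦ ![ρ, 0, pr / (γ - 1)]) hF hΔx
    (hs.intervalIntegrable_of_Icc (by linarith)) hp hpl hpr hρLm hρRm hρLp hρRp
  exact ⟨congrFun residual_eq_zero, balance⟩
end

section
/- Let a < b, M > 0, C₀, C₁, C₂ ≥ 0, let m ≥ 1 and 1 ≤ μ ≤ m be natural numbers, and let 0 < Δx ≤ 1. Let ρ, ρ̃, g, g̃ : [a,b] → ℝ be bounded integrable functions with |ρ̃(x)| ≤ M and |g(x)| ≤ M for all x, and suppose sup_{[a,b]} |ρ(x) − ρ̃(x)| ≤ C₁ Δx^m and sup_{[a,b]} |g(x) − g̃(x)| ≤ C₂ Δx^m. Let x_i ∈ [a,b] and let p₀, p̃₀ ∈ ℝ with |p₀ − p̃₀| ≤ C₀ Δx^μ. Define p(x) = p₀ + ∫_{x_i}^{x} ρ(ξ) g(ξ) dξ and p̃(x) = p̃₀ + ∫_{x_i}^{x} ρ̃(ξ) g̃(ξ) dξ. Then there is a constant C depending only on M, C₀, C₁, C₂ and b − a (not on Δx) such that sup_{x ∈ [a,b]} |p(x) − p̃(x)| ≤ C Δx^μ; i.e. the locally reconstructed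 equilibrium pressure profile approximates the exact hydrostatic pressure profile to order μ = min(q, m). -/
open MeasureTheory

/- The error in the integrand splits as `ρ g - ρ̃ g̃ = (ρ - ρ̃) g + ρ̃ (g - g̃)`, which is
`O(Δx ^ m)` since `g` and `ρ̃` are bounded. Integrating from the common anchor over a length of at
most `b - a` keeps this order, and `Δx ^ m ≤ Δx ^ μ` absorbs it into the order of the anchoring
error. -/

section

open scoped Interval

theorem norm_mul_sub_mul_le_add {R : Type*} [NonUnitalSeminormedRing R] (a b c d : R) :
    ‖a * b - c * d‖ ≤ ‖a - c‖ * ‖b‖ + ‖c‖ * ‖b - d‖ :=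
  calc
    ‖a * b - c * d‖ = ‖(a - c) * b + c * (b - d)‖ := by
      rw [sub_mul, mul_sub, sub_add_sub_cancel]
    _ ≤ ‖a - c‖ * ‖b‖ + ‖c‖ * ‖b - d‖ := norm_add_le_of_le (norm_mul_le _ _) (norm_mul_le _ _)

theorem norm_intervalIntegral_sub_le_of_norm_sub_le_const {E : Type*} [NormedAddCommGroup E]
    [NormedSpace ℝ E] {f g : ℝ → E} {a b K : ℝ} (hf : IntervalIntegrable f volume a b)
    (hg : IntervalIntegrable g volume a b) (hfg : ∀ x ∈ Ι a b, ‖f x - g x‖ ≤ K) :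
    ‖(∫ x in a..b, f x) - ∫ x in a..b, g x‖ ≤ K * |b - a| := by
  rw [← intervalIntegral.integral_sub hf hg]
  exact intervalIntegral.norm_integral_le_of_norm_le_const hfg

variable {A : Type*} [NonUnitalNormedRing A] [NormedSpace ℝ A]

/-- The hydrostatic pressure profile with density `ρ` and gravitational acceleration `g`, anchored
at the value `p₀` at `x₀`. It is the solution of `p' = ρ g` in integrated form, so that no
continuity of `ρ` and `g` is required. -/
noncomputable def equilibriumPressure (ρ g : ℝ → A) (x₀ : ℝ) (p₀ : A) (x : ℝ) : A :=
  p₀ + ∫ ξ in x₀..x, ρ ξ * g ξ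

theorem norm_equilibriumPressure_sub_le {ρ ρt g gt : ℝ → A} {x₀ x : ℝ} {p₀ pt₀ : A}
    {R G δ ε : ℝ} (hint : IntervalIntegrable (fun ξ => ρ ξ * g ξ) volume x₀ x)
    (hintt : IntervalIntegrable (fun ξ => ρt ξ * gt ξ) volume x₀ x)
    (hρt : ∀ ξ ∈ Ι x₀ x, ‖ρt ξ‖ ≤ R) (hg : ∀ ξ ∈ Ι x₀ x, ‖g ξ‖ ≤ G)
    (hρ_sub : ∀ ξ ∈ Ι x₀ x, ‖ρ ξ - ρt ξ‖ ≤ δ) (hg_sub : ∀ ξ ∈ Ι x₀ x, ‖g ξ - gt ξ‖ ≤ ε) :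
    ‖equilibriumPressure ρ g x₀ p₀ x - equilibriumPressure ρt gt x₀ pt₀ x‖ ≤
      ‖p₀ - pt₀‖ + (δ * G + R * ε) * |x - x₀| := by
  have integrand_sub_le : ∀ ξ ∈ Ι x₀ x, ‖ρ ξ * g ξ - ρt ξ * gt ξ‖ ≤ δ * G + R * ε := by
    intro ξ hξ
    have hδ : 0 ≤ δ := (norm_nonneg _).trans (hρ_sub ξ hξ)
    have hR : 0 ≤ R := (norm_nonneg _).trans (hρt ξ hξ)
    refine (norm_mul_sub_mul_le_add _ _ _ _).trans ?_
    gcongr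
    exacts [hρ_sub ξ hξ, hg ξ hξ, hρt ξ hξ, hg_sub ξ hξ]
  rw [equilibriumPressure, equilibriumPressure, add_sub_add_comm]
  exact norm_add_le_of_le le_rfl
    (norm_intervalIntegral_sub_le_of_norm_sub_le_const hint hintt integrand_sub_le)

theorem equilibrium_pressure_accuracy_general [CompleteSpace A] {a b M C₀ C₁ C₂ Δx : ℝ} {m μ : ℕ}
    (hμm : μ ≤ m) (hΔx : 0 < Δx) (hΔx_le : Δx ≤ 1) {ρ ρt g gt : ℝ → A} {xi : ℝ} {p₀ pt₀ : A}
    (hxi : xi ∈ Set.Icc a b)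
    (hint : IntervalIntegrable (fun ξ => ρ ξ * g ξ) volume a b)
    (hintt : IntervalIntegrable (fun ξ => ρt ξ * gt ξ) volume a b)
    (hρt : ∀ x ∈ Set.Icc a b, ‖ρt x‖ ≤ M) (hg : ∀ x ∈ Set.Icc a b, ‖g x‖ ≤ M)
    (hρ_sub : ∀ x ∈ Set.Icc a b, ‖ρ x - ρt x‖ ≤ C₁ * Δx ^ m)
    (hg_sub : ∀ x ∈ Set.Icc a b, ‖g x - gt x‖ ≤ C₂ * Δx ^ m)
    (hp₀ : ‖p₀ - pt₀‖ ≤ C₀ * Δx ^ μ) {x : ℝ} (hx : x ∈ Set.Icc a b) :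
    ‖equilibriumPressure ρ g xi p₀ x - equilibriumPressure ρt gt xi pt₀ x‖ ≤
      (C₀ + M * (C₁ + C₂) * (b - a)) * Δx ^ μ := by
  have hM : 0 ≤ M := (norm_nonneg _).trans (hg xi hxi)
  have hC₁ : 0 ≤ C₁ :=
    nonneg_of_mul_nonneg_left ((norm_nonneg _).trans (hρ_sub xi hxi)) (pow_pos hΔx m)
  have hC₂ : 0 ≤ C₂ :=
    nonneg_of_mul_nonneg_left ((norm_nonneg _).trans (hg_sub xi hxi)) (pow_pos hΔx m)
  have uIcc_subset : Set.uIcc xi x ⊆ Set.Icc a b := Set.uIcc_subset_Icc hxi hx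
  have uIoc_subset : Ι xi x ⊆ Set.Icc a b := Set.uIoc_subset_uIcc.trans uIcc_subset
  have uIcc_subset_uIcc : Set.uIcc xi x ⊆ Set.uIcc a b := uIcc_subset.trans Set.Icc_subset_uIcc
  calc
    _ ≤ ‖p₀ - pt₀‖ + (C₁ * Δx ^ m * M + M * (C₂ * Δx ^ m)) * |x - xi| :=
      norm_equilibriumPressure_sub_le (hint.mono_set uIcc_subset_uIcc)
        (hintt.mono_set uIcc_subset_uIcc) (fun ξ hξ => hρt ξ (uIoc_subset hξ))
        (fun ξ hξ => hg ξ (uIoc_subset hξ)) (fun ξ hξ => hρ_sub ξ (uIoc_subset hξ))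
        (fun ξ hξ => hg_sub ξ (uIoc_subset hξ))
    _ = ‖p₀ - pt₀‖ + M * (C₁ + C₂) * (Δx ^ m * |x - xi|) := by ring
    _ ≤ C₀ * Δx ^ μ + M * (C₁ + C₂) * (Δx ^ μ * (b - a)) := by
      have hdist : |x - xi| ≤ b - a := Real.dist_le_of_mem_Icc hx hxi
      have hpow : Δx ^ m ≤ Δx ^ μ := pow_le_pow_of_le_one hΔx.le hΔx_le hμm
      gcongr
    _ = (C₀ + M * (C₁ + C₂) * (b - a)) * Δx ^ μ := by ring

end

/- STATEMENT 12: The locally reconstructed equilibrium pressure profile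
p(x) = p₀ + ∫_{x_i}^x ρ g approximates the exact hydrostatic pressure
p̃(x) = p̃₀ + ∫_{x_i}^x ρ̃ g̃ to order μ = min(q,m), uniformly on [a,b],
with a constant depending only on M, C₀, C₁, C₂ and b − a. -/
theorem equilibrium_pressure_accuracy
    (a b M C₀ C₁ C₂ : ℝ) (hab : a < b) (hM : 0 < M)
    (hC₀ : 0 ≤ C₀) (hC₁ : 0 ≤ C₁) (hC₂ : 0 ≤ C₂)
    (m μ : ℕ) (hm : 1 ≤ m) (hμ : 1 ≤ μ) (hμm : μ ≤ m) :
    ∃ C : ℝ, 0 ≤ C ∧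
      ∀ (Δx : ℝ), 0 < Δx → Δx ≤ 1 →
      ∀ (ρ ρt g gt : ℝ → ℝ) (xi p₀ pt₀ : ℝ),
        xi ∈ Set.Icc a b →
        IntervalIntegrable (fun ξ => ρ ξ * g ξ) volume a b →
        IntervalIntegrable (fun ξ => ρt ξ * gt ξ) volume a b →
        (∀ x ∈ Set.Icc a b, |ρt x| ≤ M) →
        (∀ x ∈ Set.Icc a b, |g x| ≤ M) →
        (∀ x ∈ Set.Icc a b, |ρ x - ρt x| ≤ C₁ * Δx ^ m) →
        (∀ x ∈ Set.Icc a b, |g x - gt x| ≤ C₂ * Δx ^ m) →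
        |p₀ - pt₀| ≤ C₀ * Δx ^ μ →
        ∀ x ∈ Set.Icc a b,
          |(p₀ + ∫ ξ in xi..x, ρ ξ * g ξ) -
              (pt₀ + ∫ ξ in xi..x, ρt ξ * gt ξ)| ≤ C * Δx ^ μ := by
  refine ⟨C₀ + M * (C₁ + C₂) * (b - a),
    add_nonneg hC₀ (mul_nonneg (by positivity) (sub_nonneg.2 hab.le)), ?_⟩
  intro Δx hΔx hΔx_le ρ ρt g gt xi p₀ pt₀ hxi hint hintt hρt hg hρ_sub hg_sub hp₀ x hx
  exact equilibrium_pressure_accuracy_general hμm hΔx hΔx_le hxi hint hintt hρt hg hρ_sub hg_sub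
    hp₀ hx
end
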